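/- The set U = {φ ∈ C^1_n : Lφ ∈ W and φ̂ ∈ V} is an open subset of C^1_n, the map f : U → ℝ^n, f(φ) = g(φ̂), is continuously differentiable and has property (e), and for every μ ∈ {1,…,n}, every φ ∈ U and every χ ∈ C^1_n the derivative of the μ-th component satisfies Df_μ(φ)χ = Σ_{k=1}^{𝐤} Σ_{ν=1}^{n} ∂_{(k-1)n+ν} g_μ(φ̂) [ χ_ν(−d_k(Lφ)) − φ_ν'(−d_k(Lφ)) · Dd_k(Lφ)Lχ ]. -/

import Mathlib

open Set

noncomputable section

/-- The compact interval `[-r,0]`. -/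
abbrev Icc0 (r : ℝ) : Set ℝ := Set.Icc (-r) 0

/-- Extension of a continuous map on `[-r,0]` to `ℝ`, by the value `0` outside. -/
def extFun {r : ℝ} {E : Type*} [TopologicalSpace E] [Zero E] (φ : C(Icc0 r, E)) : ℝ → E :=
  fun t => if h : t ∈ Icc0 r then φ ⟨t, h⟩ else 0

section extlemmas

variable {r : ℝ} {E : Type*} [NormedAddCommGroup E] [NormedSpace ℝ E]

lemma extFun_add (φ ψ : C(Icc0 r, E)) : extFun (φ + ψ) = extFun φ + extFun ψ := by
  funext t; by_cases h : t ∈ Icc0 r <;> simp [extFun, h]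

lemma extFun_zero : extFun (0 : C(Icc0 r, E)) = 0 := by
  funext t; by_cases h : t ∈ Icc0 r <;> simp [extFun, h]

lemma extFun_smul (c : ℝ) (φ : C(Icc0 r, E)) : extFun (c • φ) = c • extFun φ := by
  funext t; by_cases h : t ∈ Icc0 r <;> simp [extFun, h]

end extlemmas

/-- The space `C¹([-r,0],E)`, realized as the closed subspace of pairs `(φ, φ')` in
`C([-r,0],E) × C([-r,0],E)` such that `φ` is differentiable on `[-r,0]` with derivative `φ'`. -/
def C1sub (r : ℝ) (E : Type*) [NormedAddCommGroup E] [NormedSpace ℝ E] :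
    Submodule ℝ (C(Icc0 r, E) × C(Icc0 r, E)) where
  carrier := {p | ∀ t ∈ Icc0 r, HasDerivWithinAt (extFun p.1) (extFun p.2 t) (Icc0 r) t}
  add_mem' := by
    intro p q hp hq t ht
    have h := (hp t ht).add (hq t ht)
    have e1 : extFun (p + q).1 = fun s => extFun p.1 s + extFun q.1 s := by
      simp [Prod.fst_add, extFun_add]; rfl
    have e2 : extFun (p + q).2 t = extFun p.2 t + extFun q.2 t := by
      simp [Prod.snd_add, extFun_add]
    rw [e1, e2]; exact h
  zero_mem' := by
    intro t ht
    have e1 : extFun (0 : C(Icc0 r, E) × C(Icc0 r, E)).1 = fun _ : ℝ => (0 : E) := by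
      simp [extFun_zero]; rfl
    have e2 : extFun (0 : C(Icc0 r, E) × C(Icc0 r, E)).2 t = 0 := by
      simp [extFun_zero]
    rw [e1, e2]; exact hasDerivWithinAt_const _ _ _
  smul_mem' := by
    intro c p hp t ht
    have h := (hp t ht).const_smul c
    have e1 : extFun (c • p).1 = fun s => c • extFun p.1 s := by
      simp [Prod.smul_fst, extFun_smul]; rfl
    have e2 : extFun (c • p).2 t = c • extFun p.2 t := by
      simp [Prod.smul_snd, extFun_smul]
    rw [e1, e2]; exact h

/-- The Banach space `C¹([-r,0],E)`. -/
abbrev C1 (r : ℝ) (E : Type*) [NormedAddCommGroup E] [NormedSpace ℝ E] := ↥(C1sub r E)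

section C1ops

variable {r : ℝ} {E : Type*} [NormedAddCommGroup E] [NormedSpace ℝ E]

/-- Evaluation `φ(t)` of `φ ∈ C¹([-r,0],E)` (extended by `0` outside `[-r,0]`). -/
def evC (φ : C1 r E) (t : ℝ) : E := extFun φ.1.1 t

/-- Evaluation `φ'(t)` of the derivative of `φ ∈ C¹([-r,0],E)`. -/
def dvC (φ : C1 r E) (t : ℝ) : E := extFun φ.1.2 t

end C1ops

/-- The continuous linear map `ℝ → (Fin n → ℝ)` sending `x` to the vector `x·e_ν`. -/
def sCLM (n : ℕ) (ν : Fin n) : ℝ →L[ℝ] (Fin n → ℝ) :=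
  ContinuousLinearMap.pi (fun j => if j = ν then ContinuousLinearMap.id ℝ ℝ else 0)

/-- `ψ · e_ν` for a continuous map `ψ`. -/
def CMsingle {r : ℝ} {n : ℕ} (ν : Fin n) (φ : C(Icc0 r, ℝ)) : C(Icc0 r, Fin n → ℝ) :=
  ⟨fun t => sCLM n ν (φ t), (sCLM n ν).continuous.comp φ.continuous⟩

lemma extFun_CMsingle {r : ℝ} {n : ℕ} (ν : Fin n) (φ : C(Icc0 r, ℝ)) (t : ℝ) :
    extFun (CMsingle ν φ) t = sCLM n ν (extFun φ t) := by
  by_cases h : t ∈ Icc0 r <;> simp [extFun, CMsingle, h]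

/-- `ψ · e_ν ∈ C¹([-r,0],ℝⁿ)` for a scalar function `ψ ∈ C¹([-r,0],ℝ)`. -/
def singleC1 {r : ℝ} {n : ℕ} (ν : Fin n) (φ : C1 r ℝ) : C1 r (Fin n → ℝ) :=
  ⟨(CMsingle ν φ.1.1, CMsingle ν φ.1.2), by
    intro t ht
    have h := ((sCLM n ν).hasFDerivAt).comp_hasDerivWithinAt t (φ.2 t ht)
    have e1 : extFun (CMsingle ν φ.1.1) = (sCLM n ν) ∘ (extFun φ.1.1) := by
      funext s; exact extFun_CMsingle ν φ.1.1 s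
    rw [show (CMsingle ν φ.1.1, CMsingle ν φ.1.2).1 = CMsingle ν φ.1.1 from rfl,
      show (CMsingle ν φ.1.1, CMsingle ν φ.1.2).2 = CMsingle ν φ.1.2 from rfl,
      e1, extFun_CMsingle]
    exact h⟩

/-- The linear map `ℝⁿ → C¹([-r,0],ℝⁿ)`, `x ↦ Σ_ν x_ν ψ_ν · e_ν` (the map `Y·x`). -/
def Ymap {r : ℝ} {n : ℕ} (ψ : Fin n → C1 r ℝ) : (Fin n → ℝ) →ₗ[ℝ] C1 r (Fin n → ℝ) where
  toFun x := ∑ ν, x ν • singleC1 ν (ψ ν)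
  map_add' x y := by simp [add_smul, Finset.sum_add_distrib]
  map_smul' c x := by simp [smul_smul, Finset.smul_sum]

/-- The closed subspace `X₀ = {φ ∈ C¹ : φ'(0) = 0}`. -/
def X0sub (r : ℝ) (n : ℕ) : Submodule ℝ (C1 r (Fin n → ℝ)) where
  carrier := {φ | dvC φ 0 = 0}
  add_mem' := by
    intro φ ψ hφ hψ
    have : dvC (φ + ψ) 0 = dvC φ 0 + dvC ψ 0 := by
      simp [dvC, extFun_add]
    rw [Set.mem_setOf_eq] at *
    rw [this, hφ, hψ, add_zero]
  zero_mem' := by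
    show dvC (0 : C1 r (Fin n → ℝ)) 0 = 0
    simp [dvC, extFun_zero]
  smul_mem' := by
    intro c φ hφ
    have : dvC (c • φ) 0 = c • dvC φ 0 := by simp [dvC, extFun_smul]
    rw [Set.mem_setOf_eq] at *
    rw [this, hφ, smul_zero]

/-- The projection-like map `R φ = φ − Y·φ'(0)`. -/
def RKmap {r : ℝ} {n : ℕ} (ψ : Fin n → C1 r ℝ) (φ : C1 r (Fin n → ℝ)) : C1 r (Fin n → ℝ) :=
  φ - Ymap ψ (dvC φ 0)

section diffeos

variable {E : Type*} [NormedAddCommGroup E] [NormedSpace ℝ E]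
variable {E' : Type*} [NormedAddCommGroup E'] [NormedSpace ℝ E']

/-- `f` defines a `C¹`-diffeomorphism from `s` onto `t`: `f` is continuously differentiable
on `s`, injective on `s`, maps `s` onto `t`, and has a continuously differentiable inverse. -/
def IsC1DiffeoOn (f : E → E') (s : Set E) (t : Set E') : Prop :=
  ContDiffOn ℝ 1 f s ∧ Set.InjOn f s ∧ f '' s = t ∧
    ∃ g : E' → E, ContDiffOn ℝ 1 g t ∧ Set.InvOn g f s t

/-- The tangent cone of `X ⊆ E` at `x`: all velocities `c'(0)` of continuously differentiable
curves in `X` through `x`. -/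
def tangentSet (X : Set E) (x : E) : Set E :=
  {v | ∃ (c : ℝ → E) (ε : ℝ), 0 < ε ∧ ContDiffOn ℝ 1 c (Set.Ioo (-ε) ε) ∧
      (∀ s ∈ Set.Ioo (-ε) ε, c s ∈ X) ∧ c 0 = x ∧ HasDerivWithinAt c v (Set.Ioo (-ε) ε) 0}

/-- `X` is a continuously differentiable submanifold of codimension `m` of `E`. -/
def IsC1SubmanifoldCodim (X : Set E) (m : ℕ) : Prop :=
  ∀ x ∈ X, ∃ (O : Set E) (Φ : E → E) (H Q : Submodule ℝ E),
    IsOpen O ∧ x ∈ O ∧ IsClosed (H : Set E) ∧ IsCompl H Q ∧ Module.finrank ℝ Q = m ∧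
    IsOpen (Φ '' O) ∧ IsC1DiffeoOn Φ O (Φ '' O) ∧ Φ '' (X ∩ O) = (H : Set E) ∩ (Φ '' O)

/-- `X` is a continuously differentiable submanifold of `E`. -/
def IsC1Submanifold (X : Set E) : Prop :=
  ∀ x ∈ X, ∃ (O : Set E) (Φ : E → E) (H : Submodule ℝ E),
    IsOpen O ∧ x ∈ O ∧ IsClosed (H : Set E) ∧
    IsOpen (Φ '' O) ∧ IsC1DiffeoOn Φ O (Φ '' O) ∧ Φ '' (X ∩ O) = (H : Set E) ∩ (Φ '' O)

/-- `A` is an almost graph over `H`. -/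
def IsAlmostGraphOver (A : Set E) (H : Set E) : Prop :=
  ∃ (dm : Set E) (α : E → E), dm ⊆ H ∧ ContDiffOn ℝ 1 α dm ∧
    (∀ ζ ∈ dm ∩ A, α ζ = 0) ∧ (∀ ζ ∈ dm \ A, α ζ ∉ H) ∧
    IsC1DiffeoOn (fun ζ => ζ + α ζ) dm A

end diffeos

/-- The data of the delay differential system
`x'(t) = g(x(t-d_1(Lx_t)),…,x(t-d_kk(Lx_t)))`. -/
structure Setting (r : ℝ) (n kk : ℕ) (F : Type*) [NormedAddCommGroup F] [NormedSpace ℝ F] where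
  /-- The continuous linear map `L : C([-r,0],ℝⁿ) → F`. -/
  L : C(Icc0 r, Fin n → ℝ) →L[ℝ] F
  /-- The open set `W ⊆ F`. -/
  W : Set F
  Wopen : IsOpen W
  /-- The delay functions `d_k : W → [0,r]`. -/
  d : Fin kk → F → ℝ
  d_smooth : ∀ k, ContDiffOn ℝ 1 (d k) W
  d_mem : ∀ k, ∀ w ∈ W, d k w ∈ Set.Icc (0:ℝ) r
  /-- The open set `V ⊆ (ℝⁿ)^kk`. -/
  V : Set (Fin kk → Fin n → ℝ)
  Vopen : IsOpen V
  /-- The right hand side function `g : V → ℝⁿ`. -/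
  g : (Fin kk → Fin n → ℝ) → Fin n → ℝ
  g_smooth : ContDiffOn ℝ 1 g V

namespace Setting

variable {r : ℝ} {n kk : ℕ} {F : Type*} [NormedAddCommGroup F] [NormedSpace ℝ F]
variable (S : Setting r n kk F)

/-- `L` applied to (the `C⁰`-part of) `φ ∈ C¹`. -/
def Lof (φ : C1 r (Fin n → ℝ)) : F := S.L φ.1.1

/-- `φ̂ = (φ(-d_1(Lφ)),…,φ(-d_kk(Lφ)))`. -/
def hat (φ : C1 r (Fin n → ℝ)) : Fin kk → Fin n → ℝ := fun k => evC φ (-(S.d k (S.Lof φ)))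

/-- The domain `U = {φ ∈ C¹ : Lφ ∈ W, φ̂ ∈ V}`. -/
def U : Set (C1 r (Fin n → ℝ)) := {φ | S.Lof φ ∈ S.W ∧ S.hat φ ∈ S.V}

/-- The right hand side `f(φ) = g(φ̂)`. -/
def fmap (φ : C1 r (Fin n → ℝ)) : Fin n → ℝ := S.g (S.hat φ)

/-- The solution manifold `X_f = {φ ∈ U : φ'(0) = f(φ)}`. -/
def Xf : Set (C1 r (Fin n → ℝ)) := {φ | φ ∈ S.U ∧ dvC φ 0 = S.fmap φ}

/-- `W_J = {w ∈ W : d_j(w)=0 for j∈J, d_k(w)>0 for k∉J}`. -/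
def WJ (J : Finset (Fin kk)) : Set F :=
  {w | w ∈ S.W ∧ (∀ j ∈ J, S.d j w = 0) ∧ ∀ k ∉ J, 0 < S.d k w}

/-- `W^J = {w ∈ W : d_k(w)>0 for k∉J}`. -/
def WupJ (J : Finset (Fin kk)) : Set F :=
  {w | w ∈ S.W ∧ ∀ k ∉ J, 0 < S.d k w}

/-- `U_J = U ∩ L⁻¹(W_J)`. -/
def UJ (J : Finset (Fin kk)) : Set (C1 r (Fin n → ℝ)) := {φ | φ ∈ S.U ∧ S.Lof φ ∈ S.WJ J}

/-- `U^J = U ∩ L⁻¹(W^J)`. -/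
def UupJ (J : Finset (Fin kk)) : Set (C1 r (Fin n → ℝ)) := {φ | φ ∈ S.U ∧ S.Lof φ ∈ S.WupJ J}

/-- `X_{fJ} = X_f ∩ U_J`. -/
def XfJ (J : Finset (Fin kk)) : Set (C1 r (Fin n → ℝ)) := S.Xf ∩ S.UJ J

/-- Hypothesis (b): `g` is bounded. -/
def HypB : Prop := ∃ M, ∀ v ∈ S.V, ‖S.g v‖ ≤ M

/-- Hypothesis (d1b): `d₁ = 0` on `W` and `g` is bounded on subsets of `V` with bounded
first component. -/
def HypD1B (hk : 0 < kk) : Prop :=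
  (∀ w ∈ S.W, S.d ⟨0, hk⟩ w = 0) ∧
  ∀ B : Set (Fin n → ℝ), Bornology.IsBounded B →
    Bornology.IsBounded (S.g '' {v | v ∈ S.V ∧ v ⟨0, hk⟩ ∈ B})

/-- The partial derivative `∂_{(k-1)n+ν} g_μ (φ̂)`. -/
def dgCoeff (φ : C1 r (Fin n → ℝ)) (k : Fin kk) (ν : Fin n) (μ : Fin n) : ℝ :=
  fderivWithin ℝ S.g S.V (S.hat φ) (Pi.single k (Pi.single ν 1)) μ

/-- The right hand side of the formula for `Df_μ(φ)χ`. -/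
def dFormula (φ χ : C1 r (Fin n → ℝ)) (μ : Fin n) : ℝ :=
  ∑ k, ∑ ν, S.dgCoeff φ k ν μ *
    (evC χ (-(S.d k (S.Lof φ))) ν -
      dvC φ (-(S.d k (S.Lof φ))) ν * fderivWithin ℝ (S.d k) S.W (S.Lof φ) (S.Lof χ))

/-- The map `R^J(φ) = φ − Y_J(Lφ)·φ'(0)` of Section 4 of the paper. -/
def RJmap (y : Fin n → F → C1 r ℝ) (φ : C1 r (Fin n → ℝ)) : C1 r (Fin n → ℝ) :=
  φ - Ymap (fun ν => y ν (S.Lof φ)) (dvC φ 0)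

end Setting


variable {r : ℝ} {n kk : ℕ} {F : Type*} [NormedAddCommGroup F] [NormedSpace ℝ F]
  [FiniteDimensional ℝ F]

/-!
On `C([-r,0],E)` the evaluation `(φ, t) ↦ φ(t)` is only continuous: for `E ≠ 0`, evaluations at
distinct times have operator norm distance `2`. On `C¹` functions the estimate
`|χ(s) - χ(t)| ≤ |χ'| |s - t|` makes point evaluation Lipschitz in `t` for the operator norm, so
that `(φ, t) ↦ φ(t)` is continuously differentiable, up to the endpoints of `[-r,0]`, with
derivative `(χ, s) ↦ χ(t) + s φ'(t)`. By the chain rule `φ ↦ φ̂` and `f : φ ↦ g(φ̂)` are then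
continuously differentiable on `U`. In the resulting formula for `Df(φ)χ` the direction `χ` occurs
only through `Lχ` and the values `χ(-d_k(Lφ))`, never through `χ'`, which gives property (e).
-/

section Evaluation

variable {E : Type*} [NormedAddCommGroup E]

lemma norm_extFun_le (φ : C(Icc0 r, E)) (t : ℝ) : ‖extFun φ t‖ ≤ ‖φ‖ := by
  by_cases h : t ∈ Icc0 r
  · simpa only [extFun, dif_pos h] using φ.norm_coe_le_norm ⟨t, h⟩
  · simp only [extFun, dif_neg h, norm_zero, norm_nonneg]

lemma continuousOn_extFun_uncurry :
    ContinuousOn (fun p : C(Icc0 r, E) × ℝ => extFun p.1 p.2) (univ ×ˢ Icc0 r) := by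
  rw [continuousOn_iff_continuous_domRestrict]
  have h_eval : Continuous fun p : (univ ×ˢ Icc0 r : Set (C(Icc0 r, E) × ℝ)) =>
      p.1.1 ⟨p.1.2, p.2.2⟩ := by fun_prop
  exact h_eval.congr fun p => by simp only [domRestrict_apply, extFun, dif_pos p.2.2]

variable [NormedSpace ℝ E]

lemma norm_extFun_sub_le {φ ψ : C(Icc0 r, E)} (h : (φ, ψ) ∈ C1sub r E) {s t : ℝ}
    (hs : s ∈ Icc0 r) (ht : t ∈ Icc0 r) : ‖extFun φ t - extFun φ s‖ ≤ ‖ψ‖ * ‖t - s‖ :=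
  (convex_Icc (-r) 0).norm_image_sub_le_of_norm_hasDerivWithin_le h
    (fun u _ => norm_extFun_le ψ u) hs ht

/-- Evaluation at `t` as a continuous linear map on `C([-r,0],E)`, with the convention of `extFun`
that it vanishes for `t` outside `[-r,0]`. -/
def extFunCLM (r : ℝ) (E : Type*) [NormedAddCommGroup E] [NormedSpace ℝ E] (t : ℝ) :
    C(Icc0 r, E) →L[ℝ] E :=
  if h : t ∈ Icc0 r then ContinuousMap.evalCLM ℝ ⟨t, h⟩ else 0

@[simp]
lemma extFunCLM_apply (t : ℝ) (φ : C(Icc0 r, E)) : extFunCLM r E t φ = extFun φ t := by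
  by_cases h : t ∈ Icc0 r <;> simp [extFunCLM, extFun, h]

variable {X : Type*} [NormedAddCommGroup X] [NormedSpace ℝ X] {j D : X →L[ℝ] C(Icc0 r, E)}

lemma lipschitzOnWith_extFunCLM_comp (hD : ∀ x, (j x, D x) ∈ C1sub r E) :
    LipschitzOnWith ‖D‖₊ (fun t => extFunCLM r E t ∘L j) (Icc0 r) := by
  refine LipschitzOnWith.of_dist_le_mul fun t ht s hs => ?_
  rw [dist_eq_norm, dist_eq_norm, coe_nnnorm]
  refine ContinuousLinearMap.opNorm_le_bound _ (by positivity) fun x => ?_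
  calc ‖(extFunCLM r E t ∘L j - extFunCLM r E s ∘L j) x‖
      = ‖extFun (j x) t - extFun (j x) s‖ := by simp
    _ ≤ ‖D x‖ * ‖t - s‖ := norm_extFun_sub_le (hD x) hs ht
    _ ≤ ‖D‖ * ‖x‖ * ‖t - s‖ := by gcongr; exact D.le_opNorm x
    _ = ‖D‖ * ‖t - s‖ * ‖x‖ := by ring

/-- The derivative `(y, s) ↦ y(t) + s x'(t)` at `(x, t)` of the evaluation map `(x, t) ↦ x(t)` on
`X × [-r,0]`, where `X` is a normed space of `C¹` functions: `j` is the inclusion of `X` into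
`C([-r,0],E)` and `D` is differentiation. -/
def evalDeriv (j D : X →L[ℝ] C(Icc0 r, E)) (p : X × ℝ) : X × ℝ →L[ℝ] E :=
  (extFunCLM r E p.2 ∘L j).coprod (ContinuousLinearMap.toSpanSingleton ℝ (extFun (D p.1) p.2))

lemma continuousOn_evalDeriv (hD : ∀ x, (j x, D x) ∈ C1sub r E) :
    ContinuousOn (evalDeriv j D) (univ ×ˢ Icc0 r) := by
  have h_eval : ContinuousOn (fun p : X × ℝ => extFunCLM r E p.2 ∘L j) (univ ×ˢ Icc0 r) :=
    (lipschitzOnWith_extFunCLM_comp hD).continuousOn.comp continuousOn_snd fun _ hp => hp.2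
  have h_deriv : ContinuousOn (fun p : X × ℝ => extFun (D p.1) p.2) (univ ×ˢ Icc0 r) :=
    continuousOn_extFun_uncurry.comp (f := fun p : X × ℝ => (D p.1, p.2)) (by fun_prop)
      fun _ hp => ⟨mem_univ _, hp.2⟩
  have h_span : ContinuousOn
      (fun p : X × ℝ => ContinuousLinearMap.toSpanSingleton ℝ (extFun (D p.1) p.2))
      (univ ×ˢ Icc0 r) :=
    (ContinuousLinearMap.toSpanSingletonCLE (𝕜 := ℝ) (E := E)).continuous.comp_continuousOn h_deriv
  refine ((h_eval.clm_comp (continuousOn_const (c := .fst ℝ X ℝ))).add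
    (h_span.clm_comp (continuousOn_const (c := .snd ℝ X ℝ)))).congr fun p _ => ?_
  ext <;> simp [evalDeriv, extFun_zero]

lemma hasFDerivWithinAt_extFun (hD : ∀ x, (j x, D x) ∈ C1sub r E) {p : X × ℝ}
    (hp : p.2 ∈ Icc0 r) :
    HasFDerivWithinAt (fun q : X × ℝ => extFun (j q.1) q.2) (evalDeriv j D p)
      (univ ×ˢ Icc0 r) p := by
  obtain ⟨x, t⟩ := p
  have h_fst : HasFDerivWithinAt (fun q : X × ℝ => (extFunCLM r E t ∘L j) q.1)
      ((extFunCLM r E t ∘L j) ∘L ContinuousLinearMap.fst ℝ X ℝ) (univ ×ˢ Icc0 r) (x, t) :=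
    ((extFunCLM r E t ∘L j) ∘L ContinuousLinearMap.fst ℝ X ℝ).hasFDerivWithinAt
  have h_snd : HasFDerivWithinAt (fun q : X × ℝ => extFun (j x) q.2)
      (ContinuousLinearMap.toSpanSingleton ℝ (extFun (D x) t) ∘L ContinuousLinearMap.snd ℝ X ℝ)
      (univ ×ˢ Icc0 r) (x, t) :=
    (hD x t hp).hasFDerivWithinAt.comp (f := Prod.snd) (x, t)
      (ContinuousLinearMap.snd ℝ X ℝ).hasFDerivWithinAt fun _ hq => hq.2
  have h_cross : HasFDerivWithinAt
      (fun q : X × ℝ => extFun (j (q.1 - x)) q.2 - extFun (j (q.1 - x)) t)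
      (0 : X × ℝ →L[ℝ] E) (univ ×ˢ Icc0 r) (x, t) := by
    refine Asymptotics.IsBigO.hasFDerivWithinAt (n := 2) (.of_bound ‖D‖ ?_)
      ⟨mem_univ _, hp⟩ one_lt_two
    filter_upwards [self_mem_nhdsWithin] with q hq
    calc ‖extFun (j (q.1 - x)) q.2 - extFun (j (q.1 - x)) t‖
        ≤ ‖D (q.1 - x)‖ * ‖q.2 - t‖ := norm_extFun_sub_le (hD _) hp hq.2
      _ ≤ ‖D‖ * ‖q - (x, t)‖ * ‖q - (x, t)‖ := by
        gcongr
        · exact D.le_opNorm_of_le (norm_fst_le (q - (x, t)))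
        · exact norm_snd_le (q - (x, t))
      _ = ‖D‖ * ‖‖q - (x, t)‖ ^ 2‖ := by rw [norm_pow, norm_norm, sq, mul_assoc]
  have h_sum : HasFDerivWithinAt _ (evalDeriv j D (x, t)) (univ ×ˢ Icc0 r) (x, t) :=
    (((h_fst.add h_snd).add h_cross).sub_const (extFun (j x) t)).congr_fderiv
      (by ext <;> simp [evalDeriv, extFun_zero])
  refine HasFDerivWithinAt.congr' h_sum (fun q _ => ?_) ⟨mem_univ _, hp⟩
  simp only [← extFunCLM_apply, ContinuousLinearMap.comp_apply, map_sub, Pi.add_apply]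
  abel

lemma contDiffOn_extFun (hD : ∀ x, (j x, D x) ∈ C1sub r E) :
    ContDiffOn ℝ 1 (fun p : X × ℝ => extFun (j p.1) p.2) (univ ×ˢ Icc0 r) := by
  rw [← zero_add 1, contDiffOn_succ_iff_hasFDerivWithinAt (by simp)]
  refine fun p hp => ⟨univ ×ˢ Icc0 r, ?_, by simp, evalDeriv j D,
    fun q hq => hasFDerivWithinAt_extFun hD hq.2, contDiffOn_zero.2 (continuousOn_evalDeriv hD)⟩
  rw [insert_eq_of_mem hp]
  exact self_mem_nhdsWithin

lemma hasFDerivAt_extFun_comp (hD : ∀ x, (j x, D x) ∈ C1sub r E) {u : X → ℝ} {u' : X →L[ℝ] ℝ}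
    {x : X} (hu : HasFDerivAt u u' x) (h_mem : ∀ᶠ y in nhds x, u y ∈ Icc0 r) :
    HasFDerivAt (fun y => extFun (j y) (u y))
      (extFunCLM r E (u x) ∘L j + u'.smulRight (extFun (D x) (u x))) x := by
  have h_comp := (hasFDerivWithinAt_extFun hD (p := (x, u x)) h_mem.self_of_nhds).comp_hasFDerivAt x
    ((hasFDerivAt_id x).prodMk hu) (h_mem.mono fun y hy => mk_mem_prod (mem_univ y) hy)
  exact h_comp.congr_fderiv (by ext; simp [evalDeriv])

/-- The continuous inclusion of `C¹([-r,0],E)` into `C([-r,0],E)`. -/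
def inclCLM (r : ℝ) (E : Type*) [NormedAddCommGroup E] [NormedSpace ℝ E] :
    C1 r E →L[ℝ] C(Icc0 r, E) :=
  ContinuousLinearMap.fst ℝ _ _ ∘L (C1sub r E).subtypeL

/-- The derivative `φ ↦ φ'` as a continuous linear map from `C¹([-r,0],E)` to `C([-r,0],E)`. -/
def derivCLM (r : ℝ) (E : Type*) [NormedAddCommGroup E] [NormedSpace ℝ E] :
    C1 r E →L[ℝ] C(Icc0 r, E) :=
  ContinuousLinearMap.snd ℝ _ _ ∘L (C1sub r E).subtypeL

lemma continuousOn_dvC_uncurry :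
    ContinuousOn (fun p : C1 r E × ℝ => dvC p.1 p.2) (univ ×ˢ Icc0 r) :=
  continuousOn_extFun_uncurry.comp (f := fun p : C1 r E × ℝ => (derivCLM r E p.1, p.2))
    (((derivCLM r E).continuous.comp continuous_fst).prodMk continuous_snd).continuousOn
    fun _ hp => ⟨mem_univ _, hp.2⟩

lemma inclCLM_derivCLM_mem (φ : C1 r E) : (inclCLM r E φ, derivCLM r E φ) ∈ C1sub r E :=
  φ.2

lemma contDiffOn_evC :
    ContDiffOn ℝ 1 (fun p : C1 r E × ℝ => evC p.1 p.2) (univ ×ˢ Icc0 r) :=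
  (contDiffOn_extFun (X := C1 r E) (j := inclCLM r E) (D := derivCLM r E) inclCLM_derivCLM_mem :)

lemma hasFDerivAt_evC_comp {u : C1 r E → ℝ} {u' : C1 r E →L[ℝ] ℝ} {φ : C1 r E}
    (hu : HasFDerivAt u u' φ) (h_mem : ∀ᶠ ψ in nhds φ, u ψ ∈ Icc0 r) :
    HasFDerivAt (fun ψ => evC ψ (u ψ))
      (extFunCLM r E (u φ) ∘L inclCLM r E + u'.smulRight (dvC φ (u φ))) φ :=
  (hasFDerivAt_extFun_comp (X := C1 r E) (j := inclCLM r E) (D := derivCLM r E)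
    inclCLM_derivCLM_mem hu h_mem :)

end Evaluation

lemma linearMap_apply_eq_sum_single_single {ι κ R M : Type*} [Fintype ι] [Fintype κ]
    [DecidableEq ι] [DecidableEq κ] [Semiring R] [AddCommMonoid M] [Module R M]
    (A : (ι → κ → R) →ₗ[R] M) (v : ι → κ → R) :
    A v = ∑ i, ∑ j, v i j • A (Pi.single i (Pi.single j 1)) := by
  have hv : v = ∑ i, ∑ j, v i j • Pi.single i (Pi.single j (1 : R)) := by
    ext i j
    simp [Finset.sum_apply, Pi.single_apply, apply_ite, ite_apply]
  conv_lhs => rw [hv]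
  simp only [map_sum, map_smul]

namespace Setting

omit [FiniteDimensional ℝ F]

variable (S : Setting r n kk F)

lemma neg_d_mem (k : Fin kk) {w : F} (hw : w ∈ S.W) : -S.d k w ∈ Icc0 r :=
  ⟨neg_le_neg (S.d_mem k w hw).2, neg_nonpos.2 (S.d_mem k w hw).1⟩

lemma contDiff_Lof : ContDiff ℝ 1 S.Lof :=
  ContinuousLinearMap.contDiff (E := C1 r (Fin n → ℝ)) (S.L ∘L inclCLM r (Fin n → ℝ))

lemma hasFDerivAt_Lof (φ : C1 r (Fin n → ℝ)) :
    HasFDerivAt S.Lof (S.L ∘L inclCLM r (Fin n → ℝ)) φ :=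
  ContinuousLinearMap.hasFDerivAt (E := C1 r (Fin n → ℝ)) (S.L ∘L inclCLM r (Fin n → ℝ))

lemma isOpen_preimage_Lof : IsOpen (S.Lof ⁻¹' S.W) :=
  S.Wopen.preimage S.contDiff_Lof.continuous

lemma contDiffOn_neg_d_Lof (k : Fin kk) :
    ContDiffOn ℝ 1 (fun φ => -S.d k (S.Lof φ)) (S.Lof ⁻¹' S.W) :=
  ((S.d_smooth k).comp S.contDiff_Lof.contDiffOn fun _ h => h).neg

lemma contDiffOn_hat : ContDiffOn ℝ 1 S.hat (S.Lof ⁻¹' S.W) :=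
  contDiffOn_pi.2 fun k => contDiffOn_evC.comp
    (contDiffOn_id.prodMk (S.contDiffOn_neg_d_Lof k)) fun _ h => ⟨mem_univ _, S.neg_d_mem k h⟩

lemma isOpen_U : IsOpen S.U :=
  S.contDiffOn_hat.continuousOn.isOpen_inter_preimage S.isOpen_preimage_Lof S.Vopen

lemma contDiffOn_fmap : ContDiffOn ℝ 1 S.fmap S.U :=
  S.g_smooth.comp (S.contDiffOn_hat.mono fun _ h => h.1) fun _ h => h.2

lemma hasFDerivAt_d (k : Fin kk) {w : F} (hw : w ∈ S.W) :
    HasFDerivAt (S.d k) (fderivWithin ℝ (S.d k) S.W w) w :=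
  ((S.d_smooth k).differentiableOn one_ne_zero w hw).hasFDerivWithinAt.hasFDerivAt
    (S.Wopen.mem_nhds hw)

lemma hasFDerivAt_g {v : Fin kk → Fin n → ℝ} (hv : v ∈ S.V) :
    HasFDerivAt S.g (fderivWithin ℝ S.g S.V v) v :=
  (S.g_smooth.differentiableOn one_ne_zero v hv).hasFDerivWithinAt.hasFDerivAt
    (S.Vopen.mem_nhds hv)

/-- The extension to `C([-r,0],ℝⁿ)` of the derivative of `φ ↦ φ̂`: its `k`-th component is
`χ ↦ χ(-d_k(Lφ)) - (Dd_k(Lφ)Lχ) φ'(-d_k(Lφ))`. -/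
def hatDeriv (φ : C1 r (Fin n → ℝ)) : C(Icc0 r, Fin n → ℝ) →L[ℝ] (Fin kk → Fin n → ℝ) :=
  ContinuousLinearMap.pi fun k =>
    extFunCLM r (Fin n → ℝ) (-S.d k (S.Lof φ)) -
      (fderivWithin ℝ (S.d k) S.W (S.Lof φ) ∘L S.L).smulRight (dvC φ (-S.d k (S.Lof φ)))

lemma hatDeriv_apply (φ : C1 r (Fin n → ℝ)) (χ : C(Icc0 r, Fin n → ℝ)) (k : Fin kk) :
    S.hatDeriv φ χ k = extFun χ (-S.d k (S.Lof φ)) -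
      fderivWithin ℝ (S.d k) S.W (S.Lof φ) (S.L χ) • dvC φ (-S.d k (S.Lof φ)) := by
  simp [hatDeriv]

lemma hasFDerivAt_hat {φ : C1 r (Fin n → ℝ)} (hφ : S.Lof φ ∈ S.W) :
    HasFDerivAt S.hat (S.hatDeriv φ ∘L inclCLM r (Fin n → ℝ)) φ := by
  refine hasFDerivAt_pi'' (E := C1 r (Fin n → ℝ)) (𝕜 := ℝ) (F' := fun _ : Fin kk => Fin n → ℝ)
    fun k => ?_
  have h_delay : HasFDerivAt (fun ψ => -S.d k (S.Lof ψ))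
      (-(fderivWithin ℝ (S.d k) S.W (S.Lof φ) ∘L S.L ∘L inclCLM r (Fin n → ℝ))) φ :=
    (HasFDerivAt.comp (E := C1 r (Fin n → ℝ)) φ (S.hasFDerivAt_d k hφ) (S.hasFDerivAt_Lof φ) :).neg
  have h_mem : ∀ᶠ ψ in nhds φ, -S.d k (S.Lof ψ) ∈ Icc0 r :=
    (S.isOpen_preimage_Lof.eventually_mem hφ).mono fun ψ => S.neg_d_mem k
  refine (hasFDerivAt_evC_comp h_delay h_mem).congr_fderiv ?_
  ext1 χ
  simp [hatDeriv, sub_eq_add_neg]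

/-- The extension `D_e f(φ)` of the derivative `Df(φ)` to `C([-r,0],ℝⁿ)`. -/
def extDeriv (φ : C1 r (Fin n → ℝ)) : C(Icc0 r, Fin n → ℝ) →L[ℝ] (Fin n → ℝ) :=
  fderivWithin ℝ S.g S.V (S.hat φ) ∘L S.hatDeriv φ

lemma fderivWithin_fmap {φ : C1 r (Fin n → ℝ)} (hφ : φ ∈ S.U) :
    fderivWithin ℝ S.fmap S.U φ = S.extDeriv φ ∘L inclCLM r (Fin n → ℝ) :=
  (HasFDerivAt.comp (E := C1 r (Fin n → ℝ)) φ (S.hasFDerivAt_g hφ.2)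
    (S.hasFDerivAt_hat hφ.1) :).hasFDerivWithinAt.fderivWithin (S.isOpen_U.uniqueDiffWithinAt hφ)

lemma extDeriv_eq_dFormula (φ χ : C1 r (Fin n → ℝ)) (μ : Fin n) :
    S.extDeriv φ χ.1.1 μ = S.dFormula φ χ μ := by
  have h_sum := congrFun (linearMap_apply_eq_sum_single_single
    (fderivWithin ℝ S.g S.V (S.hat φ)).toLinearMap (S.hatDeriv φ χ.1.1)) μ
  refine h_sum.trans ?_
  simp only [Finset.sum_apply, Pi.smul_apply, smul_eq_mul, dFormula]
  refine Finset.sum_congr rfl fun k _ => Finset.sum_congr rfl fun ν _ => ?_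
  rw [mul_comm, hatDeriv_apply, Pi.sub_apply, Pi.smul_apply, smul_eq_mul,
    mul_comm _ (dvC φ _ ν)]
  rfl

lemma continuousOn_hatDeriv_uncurry :
    ContinuousOn (fun p : C1 r (Fin n → ℝ) × C(Icc0 r, Fin n → ℝ) => S.hatDeriv p.1 p.2)
      ((S.Lof ⁻¹' S.W) ×ˢ univ) := by
  refine continuousOn_pi.2 fun k => ?_
  simp only [hatDeriv_apply]
  have h_Lof : ContinuousOn (fun p : C1 r (Fin n → ℝ) × C(Icc0 r, Fin n → ℝ) => S.Lof p.1)
      ((S.Lof ⁻¹' S.W) ×ˢ univ) :=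
    (S.contDiff_Lof.continuous.comp continuous_fst).continuousOn
  have h_delay : ContinuousOn
      (fun p : C1 r (Fin n → ℝ) × C(Icc0 r, Fin n → ℝ) => -S.d k (S.Lof p.1))
      ((S.Lof ⁻¹' S.W) ×ˢ univ) :=
    (S.contDiffOn_neg_d_Lof k).continuousOn.comp continuousOn_fst fun _ hp => hp.1
  have h_eval := continuousOn_extFun_uncurry.comp (continuousOn_snd.prodMk h_delay)
    fun p hp => ⟨mem_univ p.2, S.neg_d_mem k hp.1⟩
  have h_slope := continuousOn_dvC_uncurry.comp (continuousOn_fst.prodMk h_delay)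
    fun p hp => ⟨mem_univ p.1, S.neg_d_mem k hp.1⟩
  have h_Dd := (((S.d_smooth k).continuousOn_fderivWithin S.Wopen.uniqueDiffOn le_rfl).comp
    h_Lof fun _ hp => hp.1).clm_apply (S.L.continuous.comp continuous_snd).continuousOn
  exact h_eval.sub (h_Dd.smul h_slope)

lemma continuousOn_extDeriv_uncurry :
    ContinuousOn (fun p : C1 r (Fin n → ℝ) × C(Icc0 r, Fin n → ℝ) => S.extDeriv p.1 p.2)
      (S.U ×ˢ univ) := by
  have h_hat : ContinuousOn (fun p : C1 r (Fin n → ℝ) × C(Icc0 r, Fin n → ℝ) => S.hat p.1)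
      (S.U ×ˢ univ) :=
    S.contDiffOn_hat.continuousOn.comp continuousOn_fst fun _ hp => hp.1.1
  have h_Dg := (S.g_smooth.continuousOn_fderivWithin S.Vopen.uniqueDiffOn le_rfl).comp h_hat
    fun _ hp => hp.1.2
  exact h_Dg.clm_apply (S.continuousOn_hatDeriv_uncurry.mono fun _ hp => ⟨hp.1.1, hp.2⟩)

end Setting

omit [FiniteDimensional ℝ F] in
theorem statement0_general (S : Setting r n kk F) :
    IsOpen S.U ∧ ContDiffOn ℝ 1 S.fmap S.U ∧
    (∃ De : C1 r (Fin n → ℝ) → (C(Icc0 r, Fin n → ℝ) →ₗ[ℝ] (Fin n → ℝ)),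
      (∀ φ ∈ S.U, ∀ χ : C1 r (Fin n → ℝ), De φ χ.1.1 = fderivWithin ℝ S.fmap S.U φ χ) ∧
      ContinuousOn (fun p : (C1 r (Fin n → ℝ)) × C(Icc0 r, Fin n → ℝ) => De p.1 p.2)
        (S.U ×ˢ Set.univ)) ∧
    (∀ μ : Fin n, ∀ φ ∈ S.U, ∀ χ : C1 r (Fin n → ℝ),
      fderivWithin ℝ S.fmap S.U φ χ μ = S.dFormula φ χ μ) := by
  have h_deriv : ∀ φ ∈ S.U, ∀ χ : C1 r (Fin n → ℝ),
      S.extDeriv φ χ.1.1 = fderivWithin ℝ S.fmap S.U φ χ :=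
    fun φ hφ χ => congrArg (fun A => A χ) (S.fderivWithin_fmap hφ).symm
  refine ⟨S.isOpen_U, S.contDiffOn_fmap,
    ⟨fun φ => (S.extDeriv φ).toLinearMap, h_deriv, S.continuousOn_extDeriv_uncurry⟩,
    fun μ φ hφ χ => ?_⟩
  rw [← h_deriv φ hφ χ, S.extDeriv_eq_dFormula]

/-- Proposition 2.1: `U` is open, `f` is continuously differentiable with property (e),
and the formula for `Df_μ(φ)χ` holds. -/
theorem statement0 (hr : 0 < r) (S : Setting r n kk F) (hV : S.U.Nonempty) :
    IsOpen S.U ∧ ContDiffOn ℝ 1 S.fmap S.U ∧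
    (∃ De : C1 r (Fin n → ℝ) → (C(Icc0 r, Fin n → ℝ) →ₗ[ℝ] (Fin n → ℝ)),
      (∀ φ ∈ S.U, ∀ χ : C1 r (Fin n → ℝ), De φ χ.1.1 = fderivWithin ℝ S.fmap S.U φ χ) ∧
      ContinuousOn (fun p : (C1 r (Fin n → ℝ)) × C(Icc0 r, Fin n → ℝ) => De p.1 p.2)
        (S.U ×ˢ Set.univ)) ∧
    (∀ μ : Fin n, ∀ φ ∈ S.U, ∀ χ : C1 r (Fin n → ℝ),
      fderivWithin ℝ S.fmap S.U φ χ μ = S.dFormula φ χ μ) :=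
  statement0_general S
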